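/- Let f be a smooth function on a neighborhood of (0,0) in ℝ² with f(0,0) = 0 and ∇f(0,0) = (0,0), let ψ be a smooth function of one variable with ψ(0) = 0, and suppose F(x,y) = f(x, y + ψ(x)) has nonvanishing Taylor series at the origin with Newton distance d = d(F) > 2. Let V(F) be the finite set of vertices of N(F), F*(x,y) = (Σ_{(a,b) ∈ V(F)} x^{2a} y^{2b})^{1/2}, and let D(x,y) be the determinant of the Hessian matrix of f. Assume there exist ε₀ > 0 and a neighborhood of (0,0) on which |D|^{−ε₀} is integrable. Then for every real s > −2/(d−2) there exist δ > 0 and a neighborhood U of (0,0) such that ∫_U F*(x, y − ψ(x))^{s(1/2 − 1/d)} |D(x,y)|^{δ s} dx dy < ∞. -/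

import Mathlib

open MeasureTheory Set Filter Topology

noncomputable section

/-- Iterated partial derivative `∂ₓᵃ ∂ᵧᵇ R` at `(x, y)`. -/
def pderiv2 (R : ℝ → ℝ → ℝ) (a b : ℕ) (x y : ℝ) : ℝ :=
  iteratedDeriv a (fun x' => iteratedDeriv b (fun y' => R x' y') y) x

/-- Taylor coefficient `R_{ab} = ∂ₓᵃ ∂ᵧᵇ R(0,0) / (a! b!)`. -/
def tcoeff (R : ℝ → ℝ → ℝ) (a b : ℕ) : ℝ :=
  pderiv2 R a b 0 0 / (Nat.factorial a * Nat.factorial b)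

/-- The support of the Taylor series of `R` at the origin. -/
def tsupp (R : ℝ → ℝ → ℝ) : Set (ℕ × ℕ) := {p | tcoeff R p.1 p.2 ≠ 0}

/-- The Newton polygon of `R`. -/
def newtonPolygon (R : ℝ → ℝ → ℝ) : Set (ℝ × ℝ) :=
  convexHull ℝ (⋃ p ∈ tsupp R, {q : ℝ × ℝ | (p.1 : ℝ) ≤ q.1 ∧ (p.2 : ℝ) ≤ q.2})

/-- The Newton distance of `R`. -/
def newtonDist (R : ℝ → ℝ → ℝ) : ℝ := sInf {t : ℝ | (t, t) ∈ newtonPolygon R}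

/-- `e` is a compact edge of `N(R)` of slope `-1/M` (with `M > 0`): it is the
(one-dimensional, compact) face of the Newton polygon cut out by a supporting line
`t₁ + M t₂ = c`. -/
def IsCompactEdge (R : ℝ → ℝ → ℝ) (M : ℝ) (e : Set (ℝ × ℝ)) : Prop :=
  0 < M ∧ ∃ c : ℝ, (∀ q ∈ newtonPolygon R, c ≤ q.1 + M * q.2) ∧
    e = {q ∈ newtonPolygon R | q.1 + M * q.2 = c} ∧
    ∃ v w : ℝ × ℝ, v ≠ w ∧ e = segment ℝ v w

/-- The edge polynomial `R_e(x,y) = Σ_{(a,b) ∈ e ∩ supp R} R_{ab} x^a y^b`. -/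
def edgePoly (R : ℝ → ℝ → ℝ) (e : Set (ℝ × ℝ)) (x y : ℝ) : ℝ :=
  ∑' p : ℕ × ℕ,
    Set.indicator {p : ℕ × ℕ | ((p.1 : ℝ), (p.2 : ℝ)) ∈ e}
      (fun p => tcoeff R p.1 p.2 * x ^ p.1 * y ^ p.2) p

/-- `p` has a zero of order exactly `m` at `y₀`. -/
def ZeroOfOrder (p : ℝ → ℝ) (m : ℕ) (y₀ : ℝ) : Prop :=
  (∀ j < m, iteratedDeriv j p y₀ = 0) ∧ iteratedDeriv m p y₀ ≠ 0

/-- `R` is in nonadapted coordinates: the bisectrix meets the interior of a compact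
edge `e` such that `R_e(1, ⬝)` has a real zero of order greater than `d(R)`. -/
def IsNonadapted (R : ℝ → ℝ → ℝ) : Prop :=
  ∃ (M : ℝ) (e : Set (ℝ × ℝ)) (v w : ℝ × ℝ), IsCompactEdge R M e ∧ v ≠ w ∧
    e = segment ℝ v w ∧ (∃ t : ℝ, (t, t) ∈ openSegment ℝ v w) ∧
    ∃ (y₀ : ℝ) (m : ℕ), newtonDist R < (m : ℝ) ∧
      ZeroOfOrder (fun y => edgePoly R e 1 y) m y₀

/-- `R` is in generic adapted coordinates: adapted coordinates, every compact edge has slope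
at least `-1`, and the Newton polygon meets the `t₂`-axis. -/
def GenericAdapted (R : ℝ → ℝ → ℝ) : Prop :=
  ¬ IsNonadapted R ∧ (∀ M e, IsCompactEdge R M e → 1 ≤ M) ∧
    ∃ t : ℝ, ((0 : ℝ), t) ∈ newtonPolygon R

/-- `α_M(R) = min {a + M b : (a,b) ∈ supp R}`. -/
def alphaM (R : ℝ → ℝ → ℝ) (M : ℝ) : ℝ :=
  sInf {t : ℝ | ∃ p ∈ tsupp R, t = (p.1 : ℝ) + M * p.2}

/-- `R_M`, the sum of the terms of the Taylor series of `R` of minimal `M`-weighted degree. -/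
def RMpart (R : ℝ → ℝ → ℝ) (M : ℝ) (x y : ℝ) : ℝ :=
  ∑' p : ℕ × ℕ,
    Set.indicator {p : ℕ × ℕ | p ∈ tsupp R ∧ (p.1 : ℝ) + M * p.2 = alphaM R M}
      (fun p => tcoeff R p.1 p.2 * x ^ p.1 * y ^ p.2) p

/-- The Hessian determinant of `f`. -/
def hessDet (f : ℝ → ℝ → ℝ) (x y : ℝ) : ℝ :=
  pderiv2 f 2 0 x y * pderiv2 f 0 2 x y - (pderiv2 f 1 1 x y) ^ 2

/-- `F*(x,y) = (Σ_{(a,b) vertex of N(F)} x^{2a} y^{2b})^{1/2}`. -/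
def vertexFn (F : ℝ → ℝ → ℝ) (x y : ℝ) : ℝ :=
  Real.sqrt (∑' p : ℕ × ℕ,
    Set.indicator
      {p : ℕ × ℕ | ((p.1 : ℝ), (p.2 : ℝ)) ∈ (newtonPolygon F).extremePoints ℝ}
      (fun p => x ^ (2 * p.1) * y ^ (2 * p.2)) p)

/-!
Put `A = -log |x|` and `B = -log |y|`, so that `|x| ^ a * |y| ^ b = exp (-(A a + B b))`. For
`|x|, |y| ≤ 1` the form `A t₁ + B t₂` attains its minimum over the Newton polygon at a vertex, whose
monomial therefore dominates `|x y| ^ t` for every `(t, t)` in the polygon. Hence `F*` is at least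
`|x y| ^ t` for `t` arbitrarily close to `d`, and `F* ^ α` is integrable near the origin as soon as
`-1 < α d`; the area-preserving shear `(x, y) ↦ (x, y - ψ x)` does not affect this.
For `α = s (1/2 - 1/d)` the condition `-1 < α d` says exactly that `-2/(d - 2) < s`. It is open in
`α`, which leaves room for Hölder's inequality with a small power of `|D|`.
-/

section Convexity

instance posSMulStrictMono_prodLex {𝕜 α β : Type*} [Semiring 𝕜] [PartialOrder 𝕜]
    [AddCommMonoid α] [PartialOrder α] [Module 𝕜 α] [PosSMulStrictMono 𝕜 α]
    [AddCommMonoid β] [PartialOrder β] [Module 𝕜 β] [PosSMulStrictMono 𝕜 β] :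
    PosSMulStrictMono 𝕜 (α ×ₗ β) where
  smul_lt_smul_of_pos_left c hc x y hxy := by
    rw [Prod.Lex.lt_iff] at hxy ⊢
    rcases hxy with hfst | ⟨hfst, hsnd⟩
    · exact .inl (smul_lt_smul_of_pos_left hfst hc)
    · exact .inr ⟨congrArg (c • ·) hfst, smul_lt_smul_of_pos_left hsnd hc⟩

theorem mem_extremePoints_of_injective_of_forall_le {𝕜 E β : Type*} [Semiring 𝕜] [PartialOrder 𝕜]
    [AddCommGroup E] [Module 𝕜 E] [AddCommGroup β] [PartialOrder β] [IsOrderedAddMonoid β]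
    [Module 𝕜 β] [PosSMulStrictMono 𝕜 β] {L : E →ₗ[𝕜] β}
    (hL : Function.Injective L) {s : Set E} {v : E} (hv : v ∈ s) (hmin : ∀ q ∈ s, L v ≤ L q) :
    v ∈ s.extremePoints 𝕜 := by
  refine mem_extremePoints_iff_left.2 ⟨hv, ?_⟩
  rintro u hu w hw ⟨a, b, ha, hb, hab, huw⟩
  have hLv : a • L u + b • L w = a • L v + b • L v := by
    rw [← map_smul, ← map_smul, ← map_add, huw, ← add_smul, hab, one_smul]
  by_contra huv
  have hlt : L v < L u := (hmin u hu).lt_of_ne fun h => huv (hL h.symm)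
  exact (add_lt_add_of_lt_of_le (smul_lt_smul_of_pos_left hlt ha)
    (smul_le_smul_of_nonneg_left (hmin w hw) hb.le)).ne' hLv

open scoped Pointwise in
theorem isUpperSet_convexHull {𝕜 E : Type*} [Ring 𝕜] [PartialOrder 𝕜] [AddCommGroup E]
    [Module 𝕜 E] [Preorder E] [IsOrderedAddMonoid E] {s : Set E} (hs : IsUpperSet s) :
    IsUpperSet (convexHull 𝕜 s) := by
  intro x y hxy hx
  have htranslate : (y - x) +ᵥ s ⊆ s := by
    rintro _ ⟨z, hz, rfl⟩
    exact hs (le_add_of_nonneg_left (sub_nonneg.2 hxy)) hz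
  have hy : (y - x) +ᵥ x ∈ (y - x) +ᵥ convexHull 𝕜 s := vadd_mem_vadd_set hx
  rw [vadd_eq_add, sub_add_cancel, ← convexHull_vadd] at hy
  exact convexHull_mono htranslate hy

theorem isAntichain_extremePoints_of_isUpperSet {𝕜 E : Type*} [Field 𝕜] [LinearOrder 𝕜]
    [IsStrictOrderedRing 𝕜] [AddCommGroup E] [Module 𝕜 E] [Preorder E] [IsOrderedAddMonoid E]
    {s : Set E} (hs : IsUpperSet s) :
    IsAntichain (· ≤ ·) (s.extremePoints 𝕜) := by
  intro x hx y hy hne hxy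
  have hreflect : y + (y - x) ∈ s := hs (le_add_of_nonneg_right (sub_nonneg.2 hxy)) hy.1
  have hmid : y ∈ openSegment 𝕜 x (y + (y - x)) :=
    ⟨1 / 2, 1 / 2, by positivity, by positivity, by norm_num, by module⟩
  exact hne (hy.2 hx.1 hreflect hmid)

end Convexity

section NewtonPolygon

variable {R : ℝ → ℝ → ℝ}

/-- The vertex set `V(R)` of the Newton polygon, as a set of exponents. -/
def newtonVertices (R : ℝ → ℝ → ℝ) : Set (ℕ × ℕ) :=
  {p | ((p.1 : ℝ), (p.2 : ℝ)) ∈ (newtonPolygon R).extremePoints ℝ}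

theorem natCast_mem_newtonPolygon {p : ℕ × ℕ} (hp : p ∈ tsupp R) :
    ((p.1 : ℝ), (p.2 : ℝ)) ∈ newtonPolygon R :=
  subset_convexHull ℝ _ (mem_biUnion hp ⟨le_rfl, le_rfl⟩)

theorem isUpperSet_newtonPolygon (R : ℝ → ℝ → ℝ) : IsUpperSet (newtonPolygon R) :=
  isUpperSet_convexHull <| isUpperSet_iUnion₂ fun p _ => isUpperSet_Ici ((p.1 : ℝ), (p.2 : ℝ))

theorem finite_newtonVertices (R : ℝ → ℝ → ℝ) : (newtonVertices R).Finite := by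
  apply WellQuasiOrderedLE.finite_of_isAntichain
  intro p hp q hq hne hpq
  refine isAntichain_extremePoints_of_isUpperSet (isUpperSet_newtonPolygon R) hp hq ?_
    ⟨Nat.cast_le.2 hpq.1, Nat.cast_le.2 hpq.2⟩
  simpa [Prod.ext_iff] using hne

theorem exists_mem_newtonPolygon_lt (hR : (tsupp R).Nonempty) {c : ℝ} (hc : newtonDist R < c) :
    ∃ t < c, (t, t) ∈ newtonPolygon R := by
  have hdiag : {t : ℝ | (t, t) ∈ newtonPolygon R}.Nonempty := by
    obtain ⟨p, hp⟩ := hR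
    exact ⟨max p.1 p.2, isUpperSet_newtonPolygon R ⟨le_max_left _ _, le_max_right _ _⟩
      (natCast_mem_newtonPolygon hp)⟩
  obtain ⟨t, ht, htc⟩ := exists_lt_of_csInf_lt hdiag hc
  exact ⟨t, htc, ht⟩

theorem exists_mem_tsupp_forall_newtonPolygon_le {β : Type*} [AddCommGroup β] [LinearOrder β]
    [IsOrderedAddMonoid β] [Module ℝ β] [PosSMulMono ℝ β] {L : ℝ × ℝ →ₗ[ℝ] β} (hL : Monotone L)
    (hR : (tsupp R).Nonempty) :
    ∃ p ∈ tsupp R, ∀ q ∈ newtonPolygon R, L ((p.1 : ℝ), (p.2 : ℝ)) ≤ L q := by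
  have hmono : Monotone fun p : ℕ × ℕ => L ((p.1 : ℝ), (p.2 : ℝ)) :=
    fun p q hpq => hL ⟨Nat.cast_le.2 hpq.1, Nat.cast_le.2 hpq.2⟩
  obtain ⟨p, hp, hmin⟩ := IsPWO.exists_minimalFor _ _
    ((isPWO_of_wellQuasiOrderedLE (tsupp R)).image_of_monotone hmono) hR
  refine ⟨p, hp, fun q hq => ?_⟩
  refine convexHull_min ?_ ((convex_Ici (𝕜 := ℝ) _).linear_preimage L) hq
  simp only [iUnion_subset_iff]
  exact fun r hr q hq => (le_total _ _).elim id (hmin hr) |>.trans (hL hq)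

/-- The linear form `A t₁ + B t₂` with ties broken lexicographically by `t₁` and `t₂`. The
tie-breaking makes it injective, so that its minimum over a convex set is attained only at an
extreme point. -/
def lexWeight (A B : ℝ) : ℝ × ℝ →ₗ[ℝ] ℝ ×ₗ ℝ ×ₗ ℝ :=
  (toLexLinearEquiv ℝ _).toLinearMap ∘ₗ
    (A • LinearMap.fst ℝ ℝ ℝ + B • LinearMap.snd ℝ ℝ ℝ).prod
      (toLexLinearEquiv ℝ (ℝ × ℝ)).toLinearMap

theorem lexWeight_apply (A B : ℝ) (q : ℝ × ℝ) :
    lexWeight A B q = toLex (A * q.1 + B * q.2, toLex q) := rfl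

theorem injective_lexWeight (A B : ℝ) : Function.Injective (lexWeight A B) := by
  intro p q hpq
  simp only [lexWeight_apply, toLex_inj, Prod.mk.injEq] at hpq
  exact hpq.2

theorem monotone_lexWeight {A B : ℝ} (hA : 0 ≤ A) (hB : 0 ≤ B) : Monotone (lexWeight A B) := by
  intro p q hpq
  simp only [lexWeight_apply]
  refine Prod.Lex.toLex_mono ⟨?_, Prod.Lex.toLex_mono hpq⟩
  exact add_le_add (mul_le_mul_of_nonneg_left hpq.1 hA) (mul_le_mul_of_nonneg_left hpq.2 hB)

theorem exists_mem_newtonVertices_forall_le (hR : (tsupp R).Nonempty) {A B : ℝ} (hA : 0 ≤ A)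
    (hB : 0 ≤ B) :
    ∃ p ∈ newtonVertices R, ∀ q ∈ newtonPolygon R, A * p.1 + B * p.2 ≤ A * q.1 + B * q.2 := by
  obtain ⟨p, hp, hmin⟩ :=
    exists_mem_tsupp_forall_newtonPolygon_le (monotone_lexWeight hA hB) hR
  refine ⟨p, mem_extremePoints_of_injective_of_forall_le (injective_lexWeight A B)
    (natCast_mem_newtonPolygon hp) hmin, fun q hq => ?_⟩
  exact Prod.Lex.monotone_fst _ _ (hmin q hq)

end NewtonPolygon

section VertexFn

variable {R : ℝ → ℝ → ℝ}

theorem vertexFn_eq_sqrt_sum (R : ℝ → ℝ → ℝ) (x y : ℝ) :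
    vertexFn R x y =
      √(∑ p ∈ (finite_newtonVertices R).toFinset, x ^ (2 * p.1) * y ^ (2 * p.2)) := by
  rw [vertexFn, ← Finset.tsum_subtype' (finite_newtonVertices R).toFinset
    (fun p : ℕ × ℕ => x ^ (2 * p.1) * y ^ (2 * p.2)), ← tsum_subtype, Set.Finite.coe_toFinset]
  rfl

theorem vertexFn_nonneg (R : ℝ → ℝ → ℝ) (x y : ℝ) : 0 ≤ vertexFn R x y := Real.sqrt_nonneg _

theorem continuous_vertexFn (R : ℝ → ℝ → ℝ) :
    Continuous fun p : ℝ × ℝ => vertexFn R p.1 p.2 := by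
  simp only [vertexFn_eq_sqrt_sum]
  fun_prop

theorem abs_pow_mul_abs_pow_le_vertexFn {p : ℕ × ℕ} (hp : p ∈ newtonVertices R) (x y : ℝ) :
    |x| ^ p.1 * |y| ^ p.2 ≤ vertexFn R x y := by
  rw [vertexFn_eq_sqrt_sum]
  apply Real.le_sqrt_of_sq_le
  calc (|x| ^ p.1 * |y| ^ p.2) ^ 2 = x ^ (2 * p.1) * y ^ (2 * p.2) := by
        rw [pow_mul, pow_mul, ← sq_abs x, ← sq_abs y]; ring
    _ ≤ _ := Finset.single_le_sum (f := fun p : ℕ × ℕ => x ^ (2 * p.1) * y ^ (2 * p.2))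
        (fun q _ => by simp only [pow_mul]; positivity)
        ((finite_newtonVertices R).mem_toFinset.2 hp)

theorem abs_rpow_mul_abs_rpow_le_vertexFn (hR : (tsupp R).Nonempty) {q : ℝ × ℝ}
    (hq : q ∈ newtonPolygon R) {x y : ℝ} (hx : x ≠ 0) (hx1 : |x| ≤ 1) (hy : y ≠ 0)
    (hy1 : |y| ≤ 1) : |x| ^ q.1 * |y| ^ q.2 ≤ vertexFn R x y := by
  have hA : 0 ≤ -Real.log |x| := neg_nonneg.2 (Real.log_nonpos (abs_nonneg x) hx1)
  have hB : 0 ≤ -Real.log |y| := neg_nonneg.2 (Real.log_nonpos (abs_nonneg y) hy1)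
  obtain ⟨p, hp, hmin⟩ := exists_mem_newtonVertices_forall_le hR hA hB
  have hexp : ∀ a b : ℝ, |x| ^ a * |y| ^ b = Real.exp (Real.log |x| * a + Real.log |y| * b) :=
    fun a b => by
      rw [Real.rpow_def_of_pos (abs_pos.2 hx), Real.rpow_def_of_pos (abs_pos.2 hy), Real.exp_add]
  calc |x| ^ q.1 * |y| ^ q.2 ≤ |x| ^ (p.1 : ℝ) * |y| ^ (p.2 : ℝ) := by
        rw [hexp, hexp, Real.exp_le_exp]
        linarith [hmin q hq]
    _ = |x| ^ p.1 * |y| ^ p.2 := by rw [Real.rpow_natCast, Real.rpow_natCast]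
    _ ≤ vertexFn R x y := abs_pow_mul_abs_pow_le_vertexFn hp x y

end VertexFn

section IntegrableAtFilter

variable {α β : Type*} [MeasurableSpace α] [MeasurableSpace β] {μ : Measure α} {ν : Measure β}
  {l : Filter α} {l' : Filter β}

theorem integrableAtFilter_mul_prod [SFinite μ] [SFinite ν] {A : Type*} [NormedRing A] {f : α → A}
    {g : β → A}
    (hf : IntegrableAtFilter f l μ) (hg : IntegrableAtFilter g l' ν) :
    IntegrableAtFilter (fun p : α × β => f p.1 * g p.2) (l ×ˢ l') (μ.prod ν) := by
  obtain ⟨s, hs, hfs⟩ := hf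
  obtain ⟨t, ht, hgt⟩ := hg
  refine ⟨s ×ˢ t, prod_mem_prod hs ht, ?_⟩
  rw [IntegrableOn, ← Measure.prod_restrict]
  exact hfs.mul_prod hgt

theorem integrableAtFilter_comp_of_measurePreserving {E : Type*} [NormedAddCommGroup E]
    [l'.IsMeasurablyGenerated] {φ : α → β} (hφ : MeasurePreserving φ μ ν) (hl : Tendsto φ l l')
    {g : β → E} (hg : IntegrableAtFilter g l' ν) : IntegrableAtFilter (g ∘ φ) l μ := by
  obtain ⟨s, hs, hgs⟩ := hg
  obtain ⟨t, ht, htm, hts⟩ := IsMeasurablyGenerated.exists_measurable_subset hs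
  exact ⟨φ ⁻¹' t, hl ht, (hφ.restrict_preimage htm).integrable_comp_of_integrable
    (hgs.mono_set hts)⟩

theorem integrableAtFilter_rpow_mul_rpow {u v : α → ℝ} (hu₀ : ∀ x, 0 ≤ u x) (hv₀ : ∀ x, 0 ≤ v x)
    (hu : IntegrableAtFilter u l μ) (hv : IntegrableAtFilter v l μ) {a b : ℝ} (ha : 0 ≤ a)
    (hb : 0 ≤ b) (hab : a + b = 1) : IntegrableAtFilter (fun x => u x ^ a * v x ^ b) l μ := by
  obtain ⟨s, hs, hus⟩ := hu
  obtain ⟨t, ht, hvt⟩ := hv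
  replace hus := hus.mono_set (inter_subset_left (t := t))
  replace hvt := hvt.mono_set (inter_subset_right (s := s))
  refine ⟨s ∩ t, inter_mem hs ht, Integrable.mono' ((hus.const_mul a).add (hvt.const_mul b))
    ((hus.aemeasurable.pow_const a).mul (hvt.aemeasurable.pow_const b)).aestronglyMeasurable
    (.of_forall fun x => ?_)⟩
  rw [Real.norm_of_nonneg (mul_nonneg (Real.rpow_nonneg (hu₀ x) a) (Real.rpow_nonneg (hv₀ x) b))]
  exact Real.geom_mean_le_arith_mean2_weighted ha hb (hu₀ x) (hv₀ x) hab

theorem integrableAtFilter_rpow_of_le [l.IsMeasurablyGenerated] (hμ : μ.FiniteAtFilter l)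
    {g : α → ℝ} (hg₀ : ∀ x, 0 ≤ g x) (hg : l.IsBoundedUnder (· ≤ ·) g) {a b : ℝ} (ha : a ≠ 0)
    (hab : a ≤ b) (hint : IntegrableAtFilter (fun x => g x ^ a) l μ) :
    IntegrableAtFilter (fun x => g x ^ b) l μ := by
  rcases eq_or_ne b 0 with rfl | hb
  · simp only [Real.rpow_zero]
    exact hμ.integrableAtFilter ⟨univ, univ_mem, aestronglyMeasurable_const⟩ isBoundedUnder_const
  obtain ⟨C, hC⟩ := hg
  have hbound : (fun x => g x ^ b) =O[l] fun x => g x ^ a := by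
    refine .of_bound (C ^ (b - a)) ?_
    filter_upwards [eventually_map.1 hC] with x hx
    rw [Real.norm_of_nonneg (Real.rpow_nonneg (hg₀ x) b),
      Real.norm_of_nonneg (Real.rpow_nonneg (hg₀ x) a)]
    calc g x ^ b = g x ^ (b - a) * g x ^ a := by
          rw [← Real.rpow_add' (hg₀ x) (by rwa [sub_add_cancel]), sub_add_cancel]
      _ ≤ C ^ (b - a) * g x ^ a :=
          mul_le_mul_of_nonneg_right (Real.rpow_le_rpow (hg₀ x) hx (sub_nonneg.2 hab))
            (Real.rpow_nonneg (hg₀ x) a)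
  have hmeas : StronglyMeasurableAtFilter (fun x => g x ^ b) l μ := by
    obtain ⟨s, hs, hint⟩ := hint
    refine ⟨s, hs, (hint.aemeasurable.pow_const (b / a)).aestronglyMeasurable.congr ?_⟩
    refine .of_forall fun x => ?_
    simp only [← Real.rpow_mul (hg₀ x), mul_div_cancel₀ b ha]
  exact hbound.integrableAtFilter hmeas hint

end IntegrableAtFilter

theorem locallyIntegrable_norm_rpow {E : Type*} [NormedAddCommGroup E] [NormedSpace ℝ E]
    [FiniteDimensional ℝ E] [Nontrivial E] [MeasurableSpace E] [BorelSpace E] (μ : Measure E)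
    [μ.IsAddHaarMeasure] {a : ℝ} (ha : -(Module.finrank ℝ E : ℝ) < a) :
    LocallyIntegrable (fun x : E => ‖x‖ ^ a) μ := by
  refine locallyIntegrable_of_norm_le_rpow (C := 1) (α := -a) Module.finrank_pos (neg_lt.1 ha)
    (.of_forall fun x => ?_) (measurable_norm.pow_const a).aestronglyMeasurable
  rw [neg_neg, one_mul, Real.norm_of_nonneg (Real.rpow_nonneg (norm_nonneg x) a)]

theorem integrableAtFilter_abs_rpow_mul_abs_rpow {a b : ℝ} (ha : -1 < a) (hb : -1 < b)
    (z : ℝ × ℝ) : IntegrableAtFilter (fun p : ℝ × ℝ => |p.1| ^ a * |p.2| ^ b) (𝓝 z) := by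
  rw [nhds_prod_eq]
  exact integrableAtFilter_mul_prod (locallyIntegrable_norm_rpow volume (by simpa using ha) z.1)
    (locallyIntegrable_norm_rpow volume (by simpa using hb) z.2)

theorem ae_fst_ne_and_snd_ne {α β : Type*} [MeasurableSpace α] [MeasurableSpace β]
    (μ : Measure α) (ν : Measure β) [NullSingletonClass μ] [NullSingletonClass ν] [SFinite ν]
    (a : α) (b : β) : ∀ᵐ p ∂μ.prod ν, p.1 ≠ a ∧ p.2 ≠ b :=
  (Measure.quasiMeasurePreserving_fst.ae (Measure.ae_ne μ a)).and
    (Measure.quasiMeasurePreserving_snd.ae (Measure.ae_ne ν b))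

theorem measurePreserving_shear {α G : Type*} [MeasurableSpace α] [MeasurableSpace G] [AddGroup G]
    [MeasurableSub₂ G] [MeasurableAdd G] {μ : Measure α} {ν : Measure G} [SFinite μ] [SFinite ν]
    [ν.IsAddRightInvariant] {ψ : α → G} (hψ : Measurable ψ) :
    MeasurePreserving (fun p : α × G => (p.1, p.2 - ψ p.1)) (μ.prod ν) (μ.prod ν) :=
  (MeasurePreserving.id μ).skew_product (g := fun x y => y - ψ x)
    (measurable_snd.sub (hψ.comp measurable_fst))
    (.of_forall fun x => (measurePreserving_sub_right ν (ψ x)).map_eq)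

section VertexFnRpow

variable {R : ℝ → ℝ → ℝ}

theorem integrableAtFilter_vertexFn_rpow (hR : (tsupp R).Nonempty) {α : ℝ}
    (hα : -1 < α * newtonDist R) :
    IntegrableAtFilter (fun p : ℝ × ℝ => vertexFn R p.1 p.2 ^ α) (𝓝 (0, 0)) := by
  rcases le_or_gt 0 α with hα₀ | hα₀
  · exact ((continuous_vertexFn R).rpow_const fun _ => .inr hα₀).locallyIntegrable (0, 0)
  have hdist : newtonDist R < -1 / α := by rwa [lt_div_iff_of_neg' hα₀]
  obtain ⟨t, htα, ht⟩ := exists_mem_newtonPolygon_lt hR hdist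
  rw [lt_div_iff_of_neg hα₀] at htα
  have hbound : (fun p : ℝ × ℝ => vertexFn R p.1 p.2 ^ α) =O[𝓝 (0, 0) ⊓ ae volume]
      fun p => |p.1| ^ (t * α) * |p.2| ^ (t * α) := by
    have hsquare : ∀ᶠ p : ℝ × ℝ in 𝓝 (0, 0), |p.1| < 1 ∧ |p.2| < 1 :=
      (continuous_fst.abs.tendsto' (0, 0) 0 (by simp)).eventually_lt_const one_pos |>.and
        ((continuous_snd.abs.tendsto' (0, 0) 0 (by simp)).eventually_lt_const one_pos)
    refine .of_norm_eventuallyLE ?_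
    filter_upwards [hsquare.filter_mono inf_le_left,
      (ae_fst_ne_and_snd_ne volume volume 0 0).filter_mono inf_le_right] with p ⟨hx1, hy1⟩ ⟨hx, hy⟩
    have hxt : 0 < |p.1| ^ t := Real.rpow_pos_of_pos (abs_pos.2 hx) t
    have hyt : 0 < |p.2| ^ t := Real.rpow_pos_of_pos (abs_pos.2 hy) t
    rw [Real.norm_of_nonneg (Real.rpow_nonneg (vertexFn_nonneg R _ _) α)]
    calc vertexFn R p.1 p.2 ^ α ≤ (|p.1| ^ t * |p.2| ^ t) ^ α :=
          Real.rpow_le_rpow_of_nonpos (mul_pos hxt hyt)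
            (abs_rpow_mul_abs_rpow_le_vertexFn hR ht hx hx1.le hy hy1.le) hα₀.le
      _ = |p.1| ^ (t * α) * |p.2| ^ (t * α) := by
          rw [Real.mul_rpow hxt.le hyt.le, Real.rpow_mul (abs_nonneg _),
            Real.rpow_mul (abs_nonneg _)]
  have hmeas : Measurable fun p : ℝ × ℝ => vertexFn R p.1 p.2 ^ α :=
    (continuous_vertexFn R).measurable.pow_const α
  refine IntegrableAtFilter.inf_ae_iff.1 (hbound.integrableAtFilter
    hmeas.aestronglyMeasurable.stronglyMeasurableAtFilter ?_)
  exact (integrableAtFilter_abs_rpow_mul_abs_rpow htα htα (0, 0)).inf_of_left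

theorem integrableAtFilter_vertexFn_shear_rpow (hR : (tsupp R).Nonempty) {ψ : ℝ → ℝ}
    (hψm : Measurable ψ) (hψ : Tendsto ψ (𝓝 0) (𝓝 0)) {α : ℝ} (hα : -1 < α * newtonDist R) :
    IntegrableAtFilter (fun p : ℝ × ℝ => vertexFn R p.1 (p.2 - ψ p.1) ^ α) (𝓝 (0, 0)) := by
  have hfst : Tendsto Prod.fst (𝓝 ((0 : ℝ), (0 : ℝ))) (𝓝 0) := continuous_fst.tendsto _
  have hsnd : Tendsto Prod.snd (𝓝 ((0 : ℝ), (0 : ℝ))) (𝓝 0) := continuous_snd.tendsto _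
  have hshear : Tendsto (fun p : ℝ × ℝ => (p.1, p.2 - ψ p.1)) (𝓝 (0, 0)) (𝓝 (0, 0)) :=
    hfst.prodMk_nhds (by simpa using hsnd.sub (hψ.comp hfst))
  exact integrableAtFilter_comp_of_measurePreserving (measurePreserving_shear hψm) hshear
    (integrableAtFilter_vertexFn_rpow hR hα)

end VertexFnRpow

section HessDet

variable {m n : WithTop ℕ∞}

theorem contDiffAt_iteratedDeriv_snd {𝕜 E G : Type*} [NontriviallyNormedField 𝕜]
    [NormedAddCommGroup E] [NormedSpace 𝕜 E] [NormedAddCommGroup G] [NormedSpace 𝕜 G]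
    {f : E → 𝕜 → G} {z : E × 𝕜} (hf : ContDiffAt 𝕜 n (Function.uncurry f) z) (k : ℕ)
    (hmn : m + k ≤ n) : ContDiffAt 𝕜 m (fun z => iteratedDeriv k (f z.1) z.2) z := by
  induction k generalizing m with
  | zero => simpa using! hf.of_le (by simpa using hmn)
  | succ k ih =>
    have hk : ContDiffAt 𝕜 (m + 1) (fun z => iteratedDeriv k (f z.1) z.2) z :=
      ih (by rwa [Nat.cast_succ, add_comm (k : WithTop ℕ∞), ← add_assoc] at hmn)
    simp only [iteratedDeriv_succ, ← fderiv_apply_one_eq_deriv]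
    refine ContDiffAt.clm_apply (ContDiffAt.fderiv_succ ?_ contDiffAt_snd) contDiffAt_const
    exact hk.comp (z, z.2) (contDiffAt_fst.fst.prodMk contDiffAt_snd)

theorem contDiffAt_pderiv2 {g : ℝ → ℝ → ℝ} {z : ℝ × ℝ}
    (hg : ContDiffAt ℝ n (fun p : ℝ × ℝ => g p.1 p.2) z) (a b : ℕ) (hmn : m + a + b ≤ n) :
    ContDiffAt ℝ m (fun p : ℝ × ℝ => pderiv2 g a b p.1 p.2) z := by
  have hb : ContDiffAt ℝ (m + a) (fun p : ℝ × ℝ => iteratedDeriv b (g p.1) p.2) z :=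
    contDiffAt_iteratedDeriv_snd hg b hmn
  have ha := contDiffAt_iteratedDeriv_snd (f := fun y x => iteratedDeriv b (g x) y) (z := z.swap)
    (hb.comp z.swap (contDiffAt_snd.prodMk contDiffAt_fst)) a le_rfl
  exact ha.comp z (contDiffAt_snd.prodMk contDiffAt_fst)

theorem contDiffAt_hessDet {g : ℝ → ℝ → ℝ} {z : ℝ × ℝ}
    (hg : ContDiffAt ℝ (m + 2) (fun p : ℝ × ℝ => g p.1 p.2) z) :
    ContDiffAt ℝ m (fun p : ℝ × ℝ => hessDet g p.1 p.2) z :=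
  ((contDiffAt_pderiv2 hg 2 0 (by simp)).mul (contDiffAt_pderiv2 hg 0 2 (by simp))).sub
    ((contDiffAt_pderiv2 hg 1 1 (by simp [add_assoc, one_add_one_eq_two])).pow 2)

end HessDet

theorem eventually_integrableAtFilter_vertexFn_shear_rpow_mul {R : ℝ → ℝ → ℝ}
    (hR : (tsupp R).Nonempty) {ψ : ℝ → ℝ} (hψm : Measurable ψ) (hψ : Tendsto ψ (𝓝 0) (𝓝 0))
    {D : ℝ × ℝ → ℝ}
    (hDb : (𝓝 (0, 0)).IsBoundedUnder (· ≤ ·) fun p => |D p|) {ε : ℝ} (hε : 0 < ε)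
    (hD : IntegrableAtFilter (fun p => |D p| ^ (-ε)) (𝓝 (0, 0))) {α : ℝ}
    (hα : -1 < α * newtonDist R) :
    ∀ᶠ β in 𝓝 (0 : ℝ), IntegrableAtFilter
      (fun p : ℝ × ℝ => vertexFn R p.1 (p.2 - ψ p.1) ^ α * |D p| ^ β) (𝓝 (0, 0)) := by
  obtain ⟨q, hqα, hq⟩ : ∃ q : ℝ, -1 < α * q * newtonDist R ∧ 1 < q := by
    have hcont : Continuous fun q : ℝ => α * q * newtonDist R := by fun_prop
    have hnear := (hcont.tendsto' 1 _ (by rw [mul_one])).eventually_const_lt hα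
    exact ((hnear.filter_mono nhdsWithin_le_nhds).and self_mem_nhdsWithin).exists (f := 𝓝[>] 1)
  have hconj := Real.HolderConjugate.conjExponent hq
  set q' := q.conjExponent
  have hsmall : ∀ᶠ β : ℝ in 𝓝 0, -ε < β * q' :=
    ((continuous_mul_const q').tendsto' 0 0 (zero_mul q')).eventually_const_lt (neg_lt_zero.2 hε)
  filter_upwards [hsmall] with β hβ
  have hF := integrableAtFilter_vertexFn_shear_rpow hR hψm hψ hqα
  have hDβ := integrableAtFilter_rpow_of_le (volume.finiteAt_nhds (0, 0))
    (fun p => abs_nonneg (D p)) hDb (neg_ne_zero.2 hε.ne') hβ.le hD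
  have hprod := integrableAtFilter_rpow_mul_rpow
    (fun p => Real.rpow_nonneg (vertexFn_nonneg R p.1 (p.2 - ψ p.1)) (α * q))
    (fun p => Real.rpow_nonneg (abs_nonneg (D p)) (β * q')) hF hDβ hconj.inv_nonneg
    hconj.symm.inv_nonneg hconj.inv_add_inv_eq_one
  simpa only [← Real.rpow_mul (vertexFn_nonneg _ _ _), ← Real.rpow_mul (abs_nonneg _),
    mul_inv_cancel_right₀ hconj.ne_zero, mul_inv_cancel_right₀ hconj.symm.ne_zero] using hprod

theorem neg_one_lt_mul_half_sub_inv_mul {d s : ℝ} (hd : 2 < d) (hs : -2 / (d - 2) < s) :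
    -1 < s * (1 / 2 - 1 / d) * d := by
  have hd₀ : d ≠ 0 := by linarith
  have hmul : s * (1 / 2 - 1 / d) * d = s * (d - 2) / 2 := by field_simp
  rw [div_lt_iff₀ (by linarith)] at hs
  linarith

theorem stmt_14_general {R : ℝ → ℝ → ℝ} (hR : (tsupp R).Nonempty) (hd : 2 < newtonDist R)
    {ψ : ℝ → ℝ} (hψm : Measurable ψ) (hψ : Tendsto ψ (𝓝 0) (𝓝 0)) {D : ℝ × ℝ → ℝ}
    (hDb : (𝓝 (0, 0)).IsBoundedUnder (· ≤ ·) fun p => |D p|)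
    (hD : ∃ ε > (0 : ℝ), IntegrableAtFilter (fun p => |D p| ^ (-ε)) (𝓝 (0, 0)))
    {s : ℝ} (hs : -2 / (newtonDist R - 2) < s) :
    ∃ δ > (0 : ℝ), IntegrableAtFilter
      (fun p : ℝ × ℝ => vertexFn R p.1 (p.2 - ψ p.1) ^ (s * (1 / 2 - 1 / newtonDist R)) *
        |D p| ^ (δ * s)) (𝓝 (0, 0)) := by
  obtain ⟨ε, hε, hD⟩ := hD
  have hsmall := eventually_integrableAtFilter_vertexFn_shear_rpow_mul hR hψm hψ hDb hε hD
    (neg_one_lt_mul_half_sub_inv_mul hd hs)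
  have hδs : Tendsto (fun δ : ℝ => δ * s) (𝓝[>] 0) (𝓝 0) :=
    ((continuous_mul_const s).tendsto' 0 0 (zero_mul s)).mono_left nhdsWithin_le_nhds
  obtain ⟨δ, hint, hδ⟩ := ((hδs.eventually hsmall).and self_mem_nhdsWithin).exists
  exact ⟨δ, hδ, hint⟩

/-- Integrability of the damping factor (key step in the `L^∞` estimates, Theorem 3.1):
for `s > -2/(d-2)` and `δ` small enough, `F*(x, y-ψ(x))^{s(1/2 - 1/d)} |D(x,y)|^{δ s}`
is integrable near the origin. -/
theorem stmt_14 (f : ℝ → ℝ → ℝ) (U₀ : Set (ℝ × ℝ)) (hU₀ : U₀ ∈ 𝓝 ((0 : ℝ), (0 : ℝ)))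
    (hsm : ContDiffOn ℝ (⊤ : ℕ∞) (fun p : ℝ × ℝ => f p.1 p.2) U₀)
    (h0 : f 0 0 = 0) (hgrad : fderiv ℝ (fun p : ℝ × ℝ => f p.1 p.2) (0, 0) = 0)
    (ψ : ℝ → ℝ) (hψ : ContDiff ℝ (⊤ : ℕ∞) ψ) (hψ0 : ψ 0 = 0)
    (F : ℝ → ℝ → ℝ) (hF : ∀ x y, F x y = f x (y + ψ x))
    (hts : (tsupp F).Nonempty) (hd : 2 < newtonDist F)
    (hD : ∃ ε₀ > (0 : ℝ), ∃ U ∈ 𝓝 ((0 : ℝ), (0 : ℝ)),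
      IntegrableOn (fun p : ℝ × ℝ => |hessDet f p.1 p.2| ^ (-ε₀)) U) :
    ∀ s : ℝ, -2 / (newtonDist F - 2) < s →
      ∃ δ > (0 : ℝ), ∃ U ∈ 𝓝 ((0 : ℝ), (0 : ℝ)),
        IntegrableOn
          (fun p : ℝ × ℝ =>
            vertexFn F p.1 (p.2 - ψ p.1) ^ (s * (1 / 2 - 1 / newtonDist F)) *
              |hessDet f p.1 p.2| ^ (δ * s)) U := by
  intro s hs
  have hf : ContDiffAt ℝ (0 + 2) (fun p : ℝ × ℝ => f p.1 p.2) (0, 0) :=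
    (hsm.contDiffAt hU₀).of_le (mod_cast ENat.natCast_le_of_coe_top_le_withTop le_rfl 2)
  exact stmt_14_general hts hd hψ.continuous.measurable (hψ.continuous.tendsto' 0 0 hψ0)
    (contDiffAt_hessDet hf).continuousAt.abs.isBoundedUnder_le hD hs

end
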